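/- Let H be a complex Hilbert space and A a bounded self-adjoint operator on H. The following statements are equivalent: (1) A = αP + δI for some orthogonal projection P on H and some α, δ ∈ ℝ; (2) the spectrum σ(A) contains at most two points; (3) for every x ∈ H the set {x, Ax, A²x} is linearly dependent. -/

import Mathlib

/-!
The three conditions are linked through a fourth one: `A` is annihilated by a nonzero polynomial of
degree at most two. A combination of an idempotent and the identity is annihilated by such a
polynomial, the spectrum then lies among its roots, and the functional calculus recovers the
projection from a two-point spectrum. The last condition is the same annihilation, but vector by
vector. To make it uniform (Kaplansky), choose `x` whose minimal polynomial has maximal degree. For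
any `y`, only finitely many ideals can be annihilators of some `x + t • y`, so two values of `t`
share one, and that annihilator kills both `x` and `y`; by maximality it is the one of `x`.
-/

open Polynomial

theorem finite_Ici_ideal_of_ne_bot {R : Type*} [CommRing R] [IsDedekindDomain R] {J : Ideal R}
    (hJ : J ≠ ⊥) : (Set.Ici J).Finite := by
  have : Fintype {I // I ∣ J} := UniqueFactorizationMonoid.fintypeSubtypeDvd J hJ
  have hdvd : {I | I ∣ J}.Finite := Set.finite_coe_iff.1 (Finite.of_fintype {I // I ∣ J})
  exact hdvd.subset fun _ ↦ Ideal.dvd_iff_le.2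

theorem exists_torsionOf_le_inf_torsionOf (K : Type*) {R M : Type*} [Field K] [Infinite K]
    [CommRing R] [IsDedekindDomain R] [Algebra K R] [AddCommGroup M] [Module R M] {x y : M}
    (hx : Ideal.torsionOf R M x ≠ ⊥) (hy : Ideal.torsionOf R M y ≠ ⊥) :
    ∃ z : M, Ideal.torsionOf R M z ≤ Ideal.torsionOf R M x ⊓ Ideal.torsionOf R M y := by
  let line (t : K) : M := x + algebraMap K R t • y
  have inf_le (t : K) : Ideal.torsionOf R M x ⊓ Ideal.torsionOf R M y ≤
      Ideal.torsionOf R M (line t) := by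
    rintro r ⟨hrx : r • x = 0, hry : r • y = 0⟩
    rw [Ideal.mem_torsionOf_iff, smul_add, smul_comm, hrx, hry, smul_zero, add_zero]
  have inf_ne_bot : Ideal.torsionOf R M x ⊓ Ideal.torsionOf R M y ≠ ⊥ :=
    ne_bot_of_le_ne_bot (mul_ne_zero hx hy) Ideal.mul_le_inf
  obtain ⟨s, -, t, -, hst, heq⟩ := Set.infinite_univ.exists_ne_map_eq_of_mapsTo
    (fun t _ ↦ inf_le t) (finite_Ici_ideal_of_ne_bot inf_ne_bot)
  refine ⟨line s, fun r (hrs : r • line s = 0) ↦ ?_⟩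
  have hrt : r • line t = 0 := heq.le hrs
  have hry : r • y = 0 := by
    have hdiff : algebraMap K R (s - t) • r • y = r • line s - r • line t := by
      simp only [line, map_sub]
      module
    rw [hrs, hrt, sub_zero] at hdiff
    exact ((sub_ne_zero.2 hst).isUnit.map (algebraMap K R)).smul_eq_zero.1 hdiff
  have hrx : r • x = 0 := by
    rwa [smul_add, smul_comm, hry, smul_zero, add_zero] at hrs
  exact ⟨hrx, hry⟩

theorem exists_smul_eq_zero_of_forall_exists_smul_eq_zero {K M : Type*} [Field K] [Infinite K]
    [AddCommGroup M] [Module K[X] M] {n : ℕ}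
    (h : ∀ x : M, ∃ p : K[X], p ≠ 0 ∧ p.natDegree ≤ n ∧ p • x = 0) :
    ∃ p : K[X], p ≠ 0 ∧ p.natDegree ≤ n ∧ ∀ x : M, p • x = 0 := by
  let minpolyAt (x : M) : K[X] := Submodule.IsPrincipal.generator (Ideal.torsionOf K[X] M x)
  have minpolyAt_dvd {x : M} {p : K[X]} : minpolyAt x ∣ p ↔ p • x = 0 :=
    (Submodule.IsPrincipal.mem_iff_generator_dvd _).symm
  have torsionOf_ne_bot (x : M) : Ideal.torsionOf K[X] M x ≠ ⊥ := by
    obtain ⟨p, hp, -, hpx⟩ := h x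
    exact (Submodule.ne_bot_iff _).2 ⟨p, hpx, hp⟩
  have minpolyAt_ne_zero (x : M) : minpolyAt x ≠ 0 :=
    (Submodule.IsPrincipal.eq_bot_iff_generator_eq_zero _).not.1 (torsionOf_ne_bot x)
  have natDegree_minpolyAt_le (x : M) : (minpolyAt x).natDegree ≤ n := by
    obtain ⟨p, hp, hpn, hpx⟩ := h x
    exact (natDegree_le_of_dvd (minpolyAt_dvd.2 hpx) hp).trans hpn
  obtain ⟨_, ⟨x, rfl⟩, hmax⟩ :=
    BddAbove.exists_isGreatest_of_nonempty (S := Set.range fun x ↦ (minpolyAt x).natDegree)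
      ⟨n, Set.forall_mem_range.2 natDegree_minpolyAt_le⟩ (Set.range_nonempty _)
  refine ⟨minpolyAt x, minpolyAt_ne_zero x, natDegree_minpolyAt_le x, fun y ↦ ?_⟩
  obtain ⟨z, hz⟩ := exists_torsionOf_le_inf_torsionOf K (torsionOf_ne_bot x) (torsionOf_ne_bot y)
  have hz' : minpolyAt z • x = 0 ∧ minpolyAt z • y = 0 := hz (minpolyAt_dvd.1 dvd_rfl)
  have hassoc : Associated (minpolyAt x) (minpolyAt z) :=
    associated_of_dvd_of_natDegree_le (minpolyAt_dvd.2 hz'.1) (minpolyAt_ne_zero z)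
      (hmax ⟨z, rfl⟩)
  exact minpolyAt_dvd.1 ((minpolyAt_dvd.2 hz'.2).trans hassoc.symm.dvd)

theorem not_linearIndependent_pow_smul_iff {K A M : Type*} [CommRing K] [Semiring A] [Algebra K A]
    [AddCommGroup M] [Module K M] [Module A M] [IsScalarTower K A M] {a : A} {x : M} {n : ℕ} :
    ¬ LinearIndependent K (fun i : Fin (n + 1) ↦ a ^ (i : ℕ) • x) ↔
      ∃ p : K[X], p ≠ 0 ∧ p.natDegree ≤ n ∧ aeval a p • x = 0 := by
  have aeval_smul {p : K[X]} (hp : p.natDegree < n + 1) :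
      aeval a p • x = ∑ i : Fin (n + 1), p.coeff i • a ^ (i : ℕ) • x := by
    rw [aeval_eq_sum_range' hp, Finset.sum_smul, Finset.sum_range]
    simp only [smul_assoc]
  rw [Fintype.not_linearIndependent_iff]
  constructor
  · classical
    rintro ⟨c, hc, i, hi⟩
    have hcoeff (j : Fin (n + 1)) : (ofFn (n + 1) c).coeff j = c j :=
      ofFn_coeff_eq_val_of_lt c j.is_lt
    have hdeg := ofFn_natDegree_lt n.succ_pos c
    refine ⟨ofFn (n + 1) c, fun h0 ↦ hi ?_, Nat.lt_succ_iff.1 hdeg, ?_⟩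
    · rw [← hcoeff, h0, coeff_zero]
    · simpa only [aeval_smul hdeg, hcoeff] using hc
  · rintro ⟨p, hp, hdeg, hpx⟩
    exact ⟨fun i ↦ p.coeff i, (aeval_smul (Nat.lt_succ_of_le hdeg)).symm.trans hpx,
      ⟨p.natDegree, Nat.lt_succ_of_le hdeg⟩, leadingCoeff_ne_zero.2 hp⟩

theorem forall_not_linearIndependent_pow_smul_iff {K A M : Type*} [Field K] [Infinite K]
    [Semiring A] [Algebra K A] [AddCommGroup M] [Module K M] [Module A M] [IsScalarTower K A M]
    [FaithfulSMul A M] {a : A} {n : ℕ} :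
    (∀ x : M, ¬ LinearIndependent K (fun i : Fin (n + 1) ↦ a ^ (i : ℕ) • x)) ↔
      ∃ p : K[X], p ≠ 0 ∧ p.natDegree ≤ n ∧ aeval a p = 0 := by
  simp_rw [not_linearIndependent_pow_smul_iff]
  constructor
  · intro h
    obtain ⟨p, hp, hdeg, hpM⟩ :=
      exists_smul_eq_zero_of_forall_exists_smul_eq_zero (M := Module.AEval K M a) h
    refine ⟨p, hp, hdeg, FaithfulSMul.eq_of_smul_eq_smul fun x : M ↦ ?_⟩
    exact (hpM (Module.AEval.of K M a x)).trans (zero_smul A x).symm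
  · rintro ⟨p, hp, hdeg, hpa⟩ x
    exact ⟨p, hp, hdeg, by rw [hpa, zero_smul]⟩

theorem spectrum_subset_rootSet_of_aeval_eq_zero {K A : Type*} [Field K] [Ring A] [Algebra K A]
    {a : A} {p : K[X]} (hp : p ≠ 0) (hpa : aeval a p = 0) : spectrum K a ⊆ p.rootSet K := by
  nontriviality A
  intro z hz
  have hpz : p.eval z ∈ spectrum K (aeval a p) :=
    spectrum.subset_polynomial_aeval a p (Set.mem_image_of_mem _ hz)
  rw [hpa, spectrum.zero_eq, Set.mem_singleton_iff] at hpz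
  rwa [mem_rootSet_of_ne hp, coe_aeval_eq_eval]

theorem exists_subset_pair_of_ncard_le_two {α : Type*} [Nonempty α] {s : Set α} (hs : s.Finite)
    (h : s.ncard ≤ 2) : ∃ a b, s ⊆ {a, b} := by
  interval_cases hcard : s.ncard
  · rw [(Set.ncard_eq_zero hs).1 hcard]
    simp
  · obtain ⟨a, rfl⟩ := Set.ncard_eq_one.1 hcard
    exact ⟨a, a, by simp⟩
  · obtain ⟨a, b, -, rfl⟩ := Set.ncard_eq_two.1 hcard
    exact ⟨a, b, subset_rfl⟩

theorem exists_spectrum_subset_pair_of_aeval_eq_zero {K A : Type*} [Field K] [Ring A] [Algebra K A]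
    {a : A} {p : K[X]} (hp : p ≠ 0) (hdeg : p.natDegree ≤ 2) (hpa : aeval a p = 0) :
    ∃ z w, spectrum K a ⊆ {z, w} := by
  obtain ⟨z, w, hzw⟩ := exists_subset_pair_of_ncard_le_two (rootSet_finite p K)
    ((ncard_rootSet_le p K).trans hdeg)
  exact ⟨z, w, (spectrum_subset_rootSet_of_aeval_eq_zero hp hpa).trans hzw⟩

theorem exists_aeval_smul_add_smul_one_eq_zero {K A : Type*} [CommRing K] [Nontrivial K] [Ring A]
    [Algebra K A] {e : A} (he : IsIdempotentElem e) (α δ : K) :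
    ∃ p : K[X], p ≠ 0 ∧ p.natDegree ≤ 2 ∧ aeval (α • e + δ • 1) p = 0 := by
  have hmonic : ((X - C δ) * (X - C (α + δ))).Monic := (monic_X_sub_C _).mul (monic_X_sub_C _)
  refine ⟨_, hmonic.ne_zero, by compute_degree, ?_⟩
  have hfst : aeval (α • e + δ • 1) (X - C δ) = α • e := by
    simp [Algebra.algebraMap_eq_smul_one]
  have hsnd : aeval (α • e + δ • 1) (X - C (α + δ)) = α • (e - 1) := by
    simp only [map_sub, aeval_X, aeval_C, Algebra.algebraMap_eq_smul_one]
    module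
  rw [map_mul, hfst, hsnd, smul_mul_smul_comm, mul_sub, he.eq, mul_one, sub_self, smul_zero]

theorem exists_isStarProjection_of_spectrum_subset_pair {A : Type*} [TopologicalSpace A] [Ring A]
    [StarRing A] [Algebra ℝ A] [ContinuousFunctionalCalculus ℝ A IsSelfAdjoint] {x : A}
    (hx : IsSelfAdjoint x) {a b : ℝ} (h : spectrum ℝ x ⊆ {a, b}) :
    ∃ e : A, IsStarProjection e ∧ x = (b - a) • e + a • 1 := by
  -- For `a = b` the quotient is the junk value `0`, so that `e = 0`.
  let f (t : ℝ) : ℝ := (t - a) / (b - a)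
  have hf : Continuous f := by fun_prop
  refine ⟨cfc f x, isStarProjection_iff_spectrum_subset_and_isSelfAdjoint.2
    ⟨?_, cfc_predicate f x⟩, ?_⟩
  · rw [cfc_map_spectrum f x]
    rintro _ ⟨t, ht, rfl⟩
    obtain rfl | rfl := h ht
    · simp [f]
    · by_cases hab : t - a = 0 <;> simp [f, hab]
  · have hf_inv : (spectrum ℝ x).EqOn (fun t ↦ (b - a) * f t + a) id := by
      intro t ht
      obtain rfl | rfl := h ht
      · simp [f]
      · simp [f, mul_div_cancel_of_imp']
    calc
      x = cfc (fun t ↦ (b - a) * f t + a) x := by rw [cfc_congr hf_inv, cfc_id ℝ x]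
      _ = (b - a) • cfc f x + a • 1 := by
        rw [cfc_add_const a _ x (hf.const_mul _).continuousOn, cfc_const_mul _ f x hf.continuousOn,
          Algebra.algebraMap_eq_smul_one]

section CStarAlgebra

variable {A : Type*} [CStarAlgebra A] {x : A}

theorem exists_spectrum_subset_pair_iff_exists_isStarProjection (hx : IsSelfAdjoint x) :
    (∃ a b : ℂ, spectrum ℂ x ⊆ {a, b}) ↔
      ∃ (e : A) (α δ : ℝ), IsStarProjection e ∧ x = (α : ℂ) • e + (δ : ℂ) • 1 := by
  constructor
  · rintro ⟨a, b, h⟩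
    have hre : spectrum ℝ x ⊆ {a.re, b.re} := by
      rw [← hx.spectrumRestricts.image, ← Set.image_pair]
      exact Set.image_mono h
    obtain ⟨e, he, hxe⟩ := exists_isStarProjection_of_spectrum_subset_pair hx hre
    exact ⟨e, b.re - a.re, a.re, he, hxe⟩
  · rintro ⟨e, α, δ, he, rfl⟩
    obtain ⟨p, hp, hdeg, hpx⟩ :=
      exists_aeval_smul_add_smul_one_eq_zero he.isIdempotentElem (α : ℂ) δ
    exact exists_spectrum_subset_pair_of_aeval_eq_zero hp hdeg hpx

theorem exists_spectrum_subset_pair_iff_exists_aeval_eq_zero (hx : IsSelfAdjoint x) :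
    (∃ a b : ℂ, spectrum ℂ x ⊆ {a, b}) ↔
      ∃ p : ℂ[X], p ≠ 0 ∧ p.natDegree ≤ 2 ∧ aeval x p = 0 := by
  constructor
  · intro h
    obtain ⟨e, α, δ, he, rfl⟩ := (exists_spectrum_subset_pair_iff_exists_isStarProjection hx).1 h
    exact exists_aeval_smul_add_smul_one_eq_zero he.isIdempotentElem _ _
  · rintro ⟨p, hp, hdeg, hpx⟩
    exact exists_spectrum_subset_pair_of_aeval_eq_zero hp hdeg hpx

end CStarAlgebra

theorem stmt_12 {H : Type*} [NormedAddCommGroup H] [InnerProductSpace ℂ H] [CompleteSpace H]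
    (A : H →L[ℂ] H) (hA : IsSelfAdjoint A) :
    ((∃ (P : H →L[ℂ] H) (α δ : ℝ), IsSelfAdjoint P ∧ P * P = P ∧
        A = (α : ℂ) • P + (δ : ℂ) • 1) ↔
      ∃ a b : ℂ, spectrum ℂ A ⊆ {a, b}) ∧
    ((∃ a b : ℂ, spectrum ℂ A ⊆ {a, b}) ↔
      ∀ x : H, ¬ LinearIndependent ℂ ![x, A x, A (A x)]) := by
  constructor
  · rw [exists_spectrum_subset_pair_iff_exists_isStarProjection hA]
    simp only [isStarProjection_iff, IsIdempotentElem, and_left_comm, and_assoc]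
  · have powers (x : H) : ![x, A x, A (A x)] = fun i : Fin (2 + 1) ↦ A ^ (i : ℕ) • x := by
      funext i
      fin_cases i <;> rfl
    have : IsScalarTower ℂ (H →L[ℂ] H) H := ⟨fun _ _ _ ↦ rfl⟩
    simp_rw [powers, forall_not_linearIndependent_pow_smul_iff]
    exact exists_spectrum_subset_pair_iff_exists_aeval_eq_zero hA
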